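/- Let 1 < p < ∞ and let Ω ⊂ ℝ^N be a domain with Lipschitz boundary, with the anisotropic distance d_H(x) = inf_{y ∈ ∂Ω} H⁰(x − y); d_H is Lipschitz on Ω with H(∇d_H(x)) = 1 for a.e. x ∈ Ω. Assume that ∫_Ω (∇_ξ H)(∇d_H(x)) · ∇φ(x) dx ≥ 0 for every nonnegative φ ∈ C_c^∞(Ω) (i.e. −Δ_{H,p} d_H ≥ 0 distributionally, using H(∇d_H) = 1 a.e.). Then for every u ∈ C_c^∞(Ω), ((p−1)/p)^p · ∫_Ω |u(x)|^p / d_H(x)^p dx ≤ ∫_Ω H(∇u(x))^p dx. -/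

import Mathlib

/-!
Test the distributional inequality with `φ = |u|^p d^{1-p}`. The vector field `A = ∇H(∇d)` is a
calibration: convexity and evenness of `H` give `|A · ξ| ≤ H(ξ)`, while Euler's identity and the
eikonal equation give `A · ∇d = 1`. Hence, with `t = |u| / d`,

  `A · ∇φ ≤ p t^{p-1} H(∇u) - (p-1) t^p`,

and by Young's inequality `((p-1)/p)^{p-1}` times the right side is at most
`H(∇u)^p - ((p-1)/p)^p t^p`; integrating and using `0 ≤ ∫ A · ∇φ` yields the claim.

As `φ` is only Lipschitz, it has to be mollified: by Rademacher's theorem the derivative of the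
mollification is the mollified derivative, which converges almost everywhere and is bounded by the
Lipschitz constant.
-/

open MeasureTheory Set Filter
open scoped RealInnerProductSpace Topology ENNReal NNReal

noncomputable section

/-- `ℝ^N` as a Euclidean space. -/
abbrev Euc (N : ℕ) := EuclideanSpace ℝ (Fin N)

/-- `H : ℝ^N → ℝ` is a Finsler norm: nonnegative, convex, `C²` away from the origin,
even and positively one-homogeneous, comparable to the Euclidean norm, and with
positive definite Hessian of `H²` away from the origin. -/
structure IsFinslerNorm {N : ℕ} (H : Euc N → ℝ) : Prop where
  nonneg : ∀ ξ, 0 ≤ H ξ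
  convexOn : ConvexOn ℝ Set.univ H
  smooth : ContDiffOn ℝ 2 H {(0 : Euc N)}ᶜ
  homog : ∀ (t : ℝ) (ξ : Euc N), H (t • ξ) = |t| * H ξ
  bounds : ∃ a b : ℝ, 0 < a ∧ a ≤ b ∧ ∀ ξ : Euc N, a * ‖ξ‖ ≤ H ξ ∧ H ξ ≤ b * ‖ξ‖
  hessPosDef : ∀ ξ : Euc N, ξ ≠ 0 → ∀ v : Euc N, v ≠ 0 →
    0 < iteratedFDeriv ℝ 2 (fun x => (H x) ^ 2) ξ ![v, v]

/-- The polar function `H⁰(x) = sup_{ξ ≠ 0} (ξ·x)/H(ξ)` of a Finsler norm. -/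
def polarNorm {N : ℕ} (H : Euc N → ℝ) (x : Euc N) : ℝ :=
  sSup {r : ℝ | ∃ ξ : Euc N, ξ ≠ 0 ∧ r = ⟪ξ, x⟫ / H ξ}

/-- `u ∈ C_c^∞(Ω)`: a smooth function with compact support contained in `Ω`. -/
def IsTestFun {N : ℕ} (Ω : Set (Euc N)) (u : Euc N → ℝ) : Prop :=
  ContDiff ℝ (⊤ : ℕ∞) u ∧ HasCompactSupport u ∧ tsupport u ⊆ Ω

section Lipschitz

lemma eq_zero_of_notMem_interior_tsupport {X M : Type*} [TopologicalSpace X] [TopologicalSpace M]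
    [T1Space M] [Zero M] {f : X → M} (hf : Continuous f) {x : X}
    (hx : x ∉ interior (tsupport f)) : f x = 0 := by
  by_contra hfx
  exact hx (interior_maximal subset_closure (isOpen_compl_singleton.preimage hf) hfx)

variable {E F : Type*} [NormedAddCommGroup E] [NormedSpace ℝ E] [NormedAddCommGroup F]

lemma lipschitzWith_of_lipschitzOnWith_of_eq_zero {f : E → F} {C : ℝ≥0} {K : Set E}
    (hK : IsClosed K) (hf : LipschitzOnWith C f K) (h0 : ∀ x ∉ interior K, f x = 0) :
    LipschitzWith C f := by
  have outside : ∀ x ∉ K, f x = 0 := fun x hx => h0 x fun h => hx (interior_subset h)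
  have across : ∀ x ∈ K, ∀ y ∉ K, dist (f x) (f y) ≤ C * dist x y := by
    intro x hx y hy
    -- the segment from `x` to `y` crosses `K \ interior K`, where `f` vanishes
    obtain ⟨z, hzxy, hzK, hz⟩ : ∃ z ∈ segment ℝ x y, z ∈ K ∧ z ∉ interior K := by
      by_contra! h
      obtain ⟨z, -, hz, hz'⟩ := (convex_segment x y).isPreconnected _ _ isOpen_interior
        hK.isOpen_compl (fun z hz => (em (z ∈ K)).imp (h z hz) id)
        ⟨x, left_mem_segment ℝ x y, h x (left_mem_segment ℝ x y) hx⟩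
        ⟨y, right_mem_segment ℝ x y, hy⟩
      exact hz' (interior_subset hz)
    calc dist (f x) (f y) = dist (f x) (f z) := by rw [outside y hy, h0 z hz]
      _ ≤ C * dist x z := hf.dist_le_mul x hx z hzK
      _ ≤ C * dist x y := by
        gcongr
        linarith [dist_add_dist_of_mem_segment hzxy, dist_nonneg (x := z) (y := y)]
  refine LipschitzWith.of_dist_le_mul fun x y => ?_
  by_cases hx : x ∈ K <;> by_cases hy : y ∈ K
  · exact hf.dist_le_mul x hx y hy
  · exact across x hx y hy
  · simpa only [dist_comm] using across y hy x hx
  · rw [outside x hx, outside y hy, dist_self]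
    positivity

lemma exists_lipschitzWith_of_hasCompactSupport {f : E → F} (hf : LocallyLipschitz f)
    (hc : HasCompactSupport f) : ∃ C, LipschitzWith C f := by
  obtain ⟨C, hC⟩ := hf.locallyLipschitzOn.exists_lipschitzOnWith_of_compact hc.isCompact
  exact ⟨C, lipschitzWith_of_lipschitzOnWith_of_eq_zero (isClosed_tsupport f) hC
    fun _ hx => eq_zero_of_notMem_interior_tsupport hf.continuous hx⟩

end Lipschitz

section Mollification

lemma exists_contDiffBump_seq (E : Type*) [NormedAddCommGroup E] {δ : ℝ} (hδ : 0 < δ) :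
    ∃ ρ : ℕ → ContDiffBump (0 : E), (∀ n, (ρ n).rOut ≤ δ) ∧ (∀ n, (ρ n).rOut ≤ 2 * (ρ n).rIn) ∧
      Tendsto (fun n => (ρ n).rOut) atTop (𝓝 0) := by
  refine ⟨fun n => ⟨δ / (n + 1) / 2, δ / (n + 1), by positivity, half_lt_self (by positivity)⟩,
    fun n => div_le_self hδ.le (by simp), fun n => (mul_div_cancel₀ _ two_ne_zero).ge, ?_⟩
  exact tendsto_const_nhds.div_atTop (tendsto_natCast_atTop_atTop.atTop_add tendsto_const_nhds)

variable {E F : Type*} [NormedAddCommGroup E] [NormedSpace ℝ E] [FiniteDimensional ℝ E]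
  [MeasurableSpace E] [NormedAddCommGroup F] [NormedSpace ℝ F] {μ : Measure E}

/-- The mollification `ρ ⋆ f` of `f` by the bump function `ρ`, normalised to have integral one. -/
def mollify (μ : Measure E) (ρ : ContDiffBump (0 : E)) (f : E → F) : E → F :=
  convolution (ρ.normed μ) f (ContinuousLinearMap.lsmul ℝ ℝ) μ

lemma mollify_apply (ρ : ContDiffBump (0 : E)) (f : E → F) (x : E) :
    mollify μ ρ f x = ∫ t, ρ.normed μ t • f (x - t) ∂μ := rfl

lemma mollify_nonneg (ρ : ContDiffBump (0 : E)) {f : E → ℝ} (hf : ∀ x, 0 ≤ f x) (x : E) :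
    0 ≤ mollify μ ρ f x :=
  integral_nonneg fun t => mul_nonneg (ρ.nonneg_normed t) (hf _)

variable [BorelSpace E] [μ.IsAddHaarMeasure]

lemma contDiff_mollify (ρ : ContDiffBump (0 : E)) {f : E → F}
    (hf : LocallyIntegrable f μ) : ContDiff ℝ (⊤ : ℕ∞) (mollify μ ρ f) :=
  ρ.hasCompactSupport_normed.contDiff_convolution_left _ ρ.contDiff_normed hf

lemma tsupport_mollify_subset (ρ : ContDiffBump (0 : E)) (f : E → F) :
    tsupport (mollify μ ρ f) ⊆ Metric.cthickening ρ.rOut (tsupport f) := by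
  refine closure_minimal ((support_convolution_subset _).trans ?_) Metric.isClosed_cthickening
  rw [ρ.support_normed_eq]
  rintro _ ⟨s, hs, y, hy, rfl⟩
  refine Metric.mem_cthickening_of_dist_le _ y _ _ (subset_tsupport _ hy) ?_
  simpa [dist_eq_norm] using (mem_ball_zero_iff.1 hs).le

lemma integrable_normed_smul_comp_sub (ρ : ContDiffBump (0 : E)) {f : E → F}
    (hf : LocallyIntegrable f μ) (x : E) :
    Integrable (fun t => ρ.normed μ t • f (x - t)) μ :=
  ρ.hasCompactSupport_normed.convolutionExists_left (ContinuousLinearMap.lsmul ℝ ℝ)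
    ρ.continuous_normed hf x

lemma lipschitzWith_mollify (ρ : ContDiffBump (0 : E)) {f : E → F} {C : ℝ≥0}
    (hf : LipschitzWith C f) : LipschitzWith C (mollify μ ρ f) := by
  have hint := integrable_normed_smul_comp_sub (μ := μ) ρ hf.continuous.locallyIntegrable
  refine LipschitzWith.of_dist_le_mul fun x y => ?_
  rw [dist_eq_norm, mollify_apply, mollify_apply, ← integral_sub (hint x) (hint y)]
  calc ‖∫ t, (ρ.normed μ t • f (x - t) - ρ.normed μ t • f (y - t)) ∂μ‖
      ≤ ∫ t, ρ.normed μ t * (C * dist x y) ∂μ := by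
        refine norm_integral_le_of_norm_le (ρ.integrable_normed.mul_const _)
          (.of_forall fun t => ?_)
        rw [← smul_sub, norm_smul, Real.norm_of_nonneg (ρ.nonneg_normed t), ← dist_eq_norm]
        refine mul_le_mul_of_nonneg_left ?_ (ρ.nonneg_normed t)
        simpa only [dist_sub_right] using hf.dist_le_mul (x - t) (y - t)
    _ = C * dist x y := by rw [integral_mul_const, ρ.integral_normed, one_mul]

/-- By Rademacher's theorem the difference quotients of `f` converge almost everywhere, and they
are bounded by `C`; hence the derivative passes under the convolution integral. -/
lemma hasFDerivAt_mollify [FiniteDimensional ℝ F] (ρ : ContDiffBump (0 : E)) {f : E → F} {C : ℝ≥0}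
    (hf : LipschitzWith C f) (x : E) :
    HasFDerivAt (mollify μ ρ f) (mollify μ ρ (fderiv ℝ f) x) x := by
  have hint := integrable_normed_smul_comp_sub (μ := μ) ρ hf.continuous.locallyIntegrable
  have hdiff : ∀ᵐ t ∂μ, DifferentiableAt ℝ f (x - t) :=
    (quasiMeasurePreserving_sub_left_of_right_invariant μ x).ae hf.ae_differentiableAt
  have hlip : ∀ t, LipschitzWith (Real.nnabs (ρ.normed μ t * C))
      fun y => ρ.normed μ t • f (y - t) := by
    refine fun t => LipschitzWith.of_dist_le_mul fun y z => ?_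
    have hρ : 0 ≤ ρ.normed μ t := ρ.nonneg_normed t
    rw [dist_smul₀, Real.coe_nnabs, abs_of_nonneg (by positivity), Real.norm_of_nonneg hρ,
      mul_assoc]
    refine mul_le_mul_of_nonneg_left ?_ hρ
    simpa only [dist_sub_right] using hf.dist_le_mul (y - t) (z - t)
  refine (hasFDerivAt_integral_of_dominated_loc_of_lip
    (F := fun y t => ρ.normed μ t • f (y - t)) (F' := fun t => ρ.normed μ t • fderiv ℝ f (x - t))
    univ_mem (.of_forall fun y => (hint y).aestronglyMeasurable) (hint x) ?_
    (.of_forall fun t => (hlip t).lipschitzOnWith) (ρ.integrable_normed.mul_const _) ?_).2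
  · exact (ρ.continuous_normed.measurable.smul
      ((measurable_fderiv ℝ f).comp (measurable_const.sub measurable_id))).aestronglyMeasurable
  · filter_upwards [hdiff] with t ht
    exact ((hasFDerivAt_comp_sub t).2 ht.hasFDerivAt).const_smul (ρ.normed μ t)

lemma locallyIntegrable_fderiv_of_lipschitzWith [FiniteDimensional ℝ F] {f : E → F} {C : ℝ≥0}
    (hf : LipschitzWith C f) : LocallyIntegrable (fderiv ℝ f) μ :=
  (locallyIntegrable_const (C : ℝ)).mono (measurable_fderiv ℝ f).aestronglyMeasurable
    (.of_forall fun _ => by simpa using norm_fderiv_le_of_lipschitz ℝ hf)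

lemma ae_tendsto_fderiv_mollify [FiniteDimensional ℝ F] {ρ : ℕ → ContDiffBump (0 : E)} {a : ℝ}
    (hρ : Tendsto (fun n => (ρ n).rOut) atTop (𝓝 0)) (hρa : ∀ n, (ρ n).rOut ≤ a * (ρ n).rIn)
    {f : E → F} {C : ℝ≥0} (hf : LipschitzWith C f) :
    ∀ᵐ x ∂μ, Tendsto (fun n => fderiv ℝ (mollify μ (ρ n) f) x) atTop (𝓝 (fderiv ℝ f x)) := by
  simp only [fun n x => (hasFDerivAt_mollify (μ := μ) (ρ n) hf x).fderiv]
  exact ContDiffBump.ae_convolution_tendsto_right_of_locallyIntegrable hρ (.of_forall hρa)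
    (locallyIntegrable_fderiv_of_lipschitzWith hf)

end Mollification

section Divergence

variable {E : Type*} [NormedAddCommGroup E] {Ω K : Set E} {A : E → E} {C : ℝ≥0}

lemma integrable_indicator_mul_norm [MeasurableSpace E] [OpensMeasurableSpace E] {μ : Measure E}
    (hA : LocallyIntegrableOn A Ω μ) (hK : IsCompact K) (hKΩ : K ⊆ Ω) (C : ℝ) :
    Integrable (K.indicator fun x => C * ‖A x‖) (μ.restrict Ω) :=
  ((integrable_indicator_iff hK.measurableSet).2
    ((hA.integrableOn_compact_subset hKΩ hK).norm.const_mul C)).restrict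

variable [NormedSpace ℝ E]

lemma norm_fderiv_apply_le_indicator {f : E → ℝ} (hf : LipschitzWith C f) (hfK : tsupport f ⊆ K)
    (x : E) : ‖fderiv ℝ f x (A x)‖ ≤ K.indicator (fun x => C * ‖A x‖) x := by
  by_cases hx : x ∈ K
  · rw [indicator_of_mem hx]
    exact (fderiv ℝ f x).le_of_opNorm_le (norm_fderiv_le_of_lipschitz ℝ hf) (A x)
  · rw [indicator_of_notMem hx, fderiv_of_notMem_tsupport ℝ fun h => hx (hfK h)]
    simp

variable [MeasurableSpace E] {μ : Measure E}

/-- `-div A ≥ 0` on `Ω` in the sense of distributions, for a vector field `A`: the integral of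
`A · ∇φ` over `Ω` is nonnegative for all nonnegative `φ ∈ C_c^∞(Ω)`. -/
def HasNonposDivergenceOn (A : E → E) (Ω : Set E) (μ : Measure E) : Prop :=
  ∀ φ : E → ℝ, ContDiff ℝ (⊤ : ℕ∞) φ → HasCompactSupport φ → tsupport φ ⊆ Ω → (∀ x, 0 ≤ φ x) →
    0 ≤ ∫ x in Ω, fderiv ℝ φ x (A x) ∂μ

variable [FiniteDimensional ℝ E] [BorelSpace E]

lemma aestronglyMeasurable_fderiv_apply (f : E → ℝ) {ν : Measure E}
    (hA : AEStronglyMeasurable A ν) : AEStronglyMeasurable (fun x => fderiv ℝ f x (A x)) ν :=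
  isBoundedBilinearMap_apply.continuous.comp_aestronglyMeasurable
    ((measurable_fderiv ℝ f).aestronglyMeasurable.prodMk hA)

lemma integrableOn_fderiv_apply (hA : LocallyIntegrableOn A Ω μ) {f : E → ℝ}
    (hf : LipschitzWith C f) (hc : HasCompactSupport f) (hs : tsupport f ⊆ Ω) :
    IntegrableOn (fun x => fderiv ℝ f x (A x)) Ω μ :=
  (integrable_indicator_mul_norm hA hc.isCompact hs C).mono'
    (aestronglyMeasurable_fderiv_apply f hA.aestronglyMeasurable)
    (.of_forall (norm_fderiv_apply_le_indicator hf subset_rfl))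

lemma HasNonposDivergenceOn.integral_nonneg_of_lipschitzWith [μ.IsAddHaarMeasure]
    (hdiv : HasNonposDivergenceOn A Ω μ) (hΩ : IsOpen Ω) (hA : LocallyIntegrableOn A Ω μ)
    {φ : E → ℝ} (hφ : LipschitzWith C φ) (hc : HasCompactSupport φ) (hs : tsupport φ ⊆ Ω)
    (h0 : ∀ x, 0 ≤ φ x) : 0 ≤ ∫ x in Ω, fderiv ℝ φ x (A x) ∂μ := by
  obtain ⟨δ, hδ, hδΩ⟩ := hc.isCompact.exists_cthickening_subset_open hΩ hs
  obtain ⟨ρ, hρδ, hρ2, hρ⟩ := exists_contDiffBump_seq E hδ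
  have hK : IsCompact (Metric.cthickening δ (tsupport φ)) := hc.isCompact.cthickening
  have hsupp : ∀ n, tsupport (mollify μ (ρ n) φ) ⊆ Metric.cthickening δ (tsupport φ) := fun n =>
    (tsupport_mollify_subset (ρ n) φ).trans (Metric.cthickening_mono (hρδ n) _)
  have happrox : ∀ n, 0 ≤ ∫ x in Ω, fderiv ℝ (mollify μ (ρ n) φ) x (A x) ∂μ := fun n =>
    hdiv _ (contDiff_mollify (ρ n) hφ.continuous.locallyIntegrable)
      (hK.of_isClosed_subset (isClosed_tsupport _) (hsupp n)) ((hsupp n).trans hδΩ)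
      (mollify_nonneg (ρ n) h0)
  refine ge_of_tendsto (tendsto_integral_of_dominated_convergence _
    (fun n => aestronglyMeasurable_fderiv_apply _ hA.aestronglyMeasurable)
    (integrable_indicator_mul_norm hA hK hδΩ C)
    (fun n => .of_forall
      (norm_fderiv_apply_le_indicator (lipschitzWith_mollify (ρ n) hφ) (hsupp n))) ?_)
    (.of_forall happrox)
  filter_upwards [ae_restrict_of_ae (ae_tendsto_fderiv_mollify (μ := μ) hρ hρ2 hφ)] with x hx
  exact ((ContinuousLinearMap.apply ℝ ℝ (A x)).continuous.tendsto _).comp hx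

end Divergence

section Young

variable {p : ℝ}

lemma young_rpow_sub_one_mul {s b : ℝ} (hp : 1 < p) (hs : 0 ≤ s) (hb : 0 ≤ b) :
    p * (s ^ (p - 1) * b) ≤ (p - 1) * s ^ p + b ^ p := by
  have hp0 : p ≠ 0 := (one_pos.trans hp).ne'
  have hpq : (p / (p - 1)).HolderConjugate p := (Real.HolderConjugate.conjExponent hp).symm
  have young := Real.young_inequality_of_nonneg (Real.rpow_nonneg hs (p - 1)) hb hpq
  rw [← Real.rpow_mul hs, mul_div_cancel₀ _ (sub_pos.2 hp).ne'] at young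
  calc p * (s ^ (p - 1) * b) ≤ p * (s ^ p / (p / (p - 1)) + b ^ p / p) := by gcongr
    _ = (p - 1) * s ^ p + b ^ p := by field_simp

lemma hardy_const_rpow_mul_le {t b : ℝ} (hp : 1 < p) (ht : 0 ≤ t) (hb : 0 ≤ b) :
    ((p - 1) / p) ^ (p - 1) * (p * (t ^ (p - 1) * b) - (p - 1) * t ^ p)
      ≤ b ^ p - ((p - 1) / p) ^ p * t ^ p := by
  have hp0 : 0 < p := one_pos.trans hp
  have hκ : 0 < (p - 1) / p := div_pos (sub_pos.2 hp) hp0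
  have young := young_rpow_sub_one_mul hp (mul_nonneg hκ.le ht) hb
  rw [Real.mul_rpow hκ.le ht, Real.mul_rpow hκ.le ht] at young
  have hκp : ((p - 1) / p) ^ (p - 1) * (p - 1) = p * ((p - 1) / p) ^ p := by
    rw [Real.rpow_sub_one hκ.ne']
    field_simp [(sub_pos.2 hp).ne']
  linear_combination young - t ^ p * hκp

end Young

section HardyTestFunction

variable {p : ℝ}

lemma contDiffOn_abs_rpow_mul_rpow (hp : 1 < p) (q : ℝ) :
    ContDiffOn ℝ 1 (fun y : ℝ × ℝ => |y.1| ^ p * y.2 ^ q) (univ ×ˢ Ioi 0) :=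
  (ContDiff.norm_rpow contDiff_fst hp).contDiffOn.mul
    (contDiffOn_snd.rpow_const_of_ne fun _ hy => (mem_Ioi.1 hy.2).ne')

/-- `|u|^p d^{1-p}`, the function with which the inequality `-div A ≥ 0` is tested. -/
def hardyTestFun {X : Type*} (p : ℝ) (u d : X → ℝ) (x : X) : ℝ := |u x| ^ p * d x ^ (1 - p)

lemma hardyTestFun_eq_zero {X : Type*} {u d : X → ℝ} (hp : p ≠ 0) {x : X} (hx : u x = 0) :
    hardyTestFun p u d x = 0 := by
  rw [hardyTestFun, hx, abs_zero, Real.zero_rpow hp, zero_mul]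

section Topological

variable {X : Type*} [TopologicalSpace X] {Ω : Set X} {u d : X → ℝ}

lemma tsupport_hardyTestFun_subset (hp : p ≠ 0) : tsupport (hardyTestFun p u d) ⊆ tsupport u :=
  closure_mono fun _ hx hux => hx (hardyTestFun_eq_zero hp hux)

lemma hardyTestFun_nonneg (hu : tsupport u ⊆ Ω) (hd : ∀ x ∈ Ω, 0 < d x) (hp : p ≠ 0) (x : X) :
    0 ≤ hardyTestFun p u d x := by
  by_cases hx : x ∈ Ω
  · exact mul_nonneg (Real.rpow_nonneg (abs_nonneg _) _) (Real.rpow_nonneg (hd x hx).le _)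
  · exact (hardyTestFun_eq_zero hp (image_eq_zero_of_notMem_tsupport fun h => hx (hu h))).ge

lemma integrableOn_abs_rpow_div_rpow [MeasurableSpace X] [OpensMeasurableSpace X]
    {μ : Measure X} [IsFiniteMeasureOnCompacts μ] (hp : 0 < p) (hu : Continuous u)
    (huc : HasCompactSupport u) (hus : tsupport u ⊆ Ω) (hd : ContinuousOn d Ω)
    (hd0 : ∀ x ∈ Ω, 0 < d x) : IntegrableOn (fun x => |u x| ^ p / d x ^ p) Ω μ := by
  have hcont : ContinuousOn (fun x => |u x| ^ p / d x ^ p) (tsupport u) :=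
    (hu.abs.rpow_const fun _ => .inr hp.le).continuousOn.div
      ((hd.mono hus).rpow_const fun _ _ => .inr hp.le)
      fun x hx => (Real.rpow_pos_of_pos (hd0 x (hus hx)) p).ne'
  refine ((integrableOn_iff_integrable_of_support_subset fun x hx => ?_).1
    (hcont.integrableOn_compact' huc.isCompact (isClosed_tsupport u).measurableSet)).integrableOn
  by_contra hxu
  exact hx (by simp [image_eq_zero_of_notMem_tsupport hxu, Real.zero_rpow hp.ne'])

end Topological

variable {E : Type*} [NormedAddCommGroup E] [NormedSpace ℝ E] {Ω : Set E} {u d : E → ℝ}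

lemma exists_lipschitzWith_hardyTestFun (hp : 1 < p) (hu : LocallyLipschitz u)
    (huc : HasCompactSupport u) (hus : tsupport u ⊆ Ω) (hd : LocallyLipschitzOn Ω d)
    (hd0 : ∀ x ∈ Ω, 0 < d x) : ∃ C, LipschitzWith C (hardyTestFun p u d) := by
  obtain ⟨Cu, hCu⟩ := hu.locallyLipschitzOn.exists_lipschitzOnWith_of_compact huc.isCompact
  obtain ⟨Cd, hCd⟩ := (hd.mono hus).exists_lipschitzOnWith_of_compact huc.isCompact
  have hud := hCu.prodMk hCd
  have hrange : (fun x => (u x, d x)) '' tsupport u ⊆ univ ×ˢ Ioi 0 := by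
    rintro _ ⟨x, hx, rfl⟩
    exact ⟨mem_univ _, hd0 x (hus hx)⟩
  obtain ⟨C, hC⟩ := ((contDiffOn_abs_rpow_mul_rpow hp (1 - p)).locallyLipschitzOn
    (convex_univ.prod (convex_Ioi 0)) |>.mono hrange).exists_lipschitzOnWith_of_compact
      (huc.isCompact.image_of_continuousOn hud.continuousOn)
  exact ⟨_, lipschitzWith_of_lipschitzOnWith_of_eq_zero (isClosed_tsupport u)
    (hC.comp hud (mapsTo_image _ _)) fun _ hx => hardyTestFun_eq_zero (one_pos.trans hp).ne'
      (eq_zero_of_notMem_interior_tsupport hu.continuous hx)⟩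

lemma hasFDerivAt_hardyTestFun (hp : 1 < p) {x : E} (hu : DifferentiableAt ℝ u x)
    (hd : DifferentiableAt ℝ d x) (hdx : d x ≠ 0) :
    HasFDerivAt (hardyTestFun p u d)
      (|u x| ^ p • ((1 - p) * d x ^ (1 - p - 1)) • fderiv ℝ d x +
        d x ^ (1 - p) • (p * |u x| ^ (p - 2) * u x) • fderiv ℝ u x) x :=
  ((hasDerivAt_abs_rpow (u x) hp).comp_hasFDerivAt x hu.hasFDerivAt).mul
    ((Real.hasDerivAt_rpow_const (.inl hdx)).comp_hasFDerivAt x hd.hasFDerivAt)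

lemma fderiv_hardyTestFun_apply_le (hp : 1 < p) {x v : E} (hu : DifferentiableAt ℝ u x)
    (hd : DifferentiableAt ℝ d x) (hd0 : 0 < d x) (hdv : 1 ≤ fderiv ℝ d x v) :
    fderiv ℝ (hardyTestFun p u d) x v ≤
      p * ((|u x| / d x) ^ (p - 1) * |fderiv ℝ u x v|) - (p - 1) * (|u x| / d x) ^ p := by
  have hp1 : 0 < p - 1 := sub_pos.2 hp
  have hux : |u x| ^ (p - 2) * |u x| = |u x| ^ (p - 1) := by
    rcases eq_or_ne (u x) 0 with h | h
    · simp [h, Real.zero_rpow hp1.ne']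
    · rw [← Real.rpow_add_one (abs_ne_zero.2 h)]
      ring_nf
  have hgrad_u : |u x| ^ (p - 2) * u x * fderiv ℝ u x v ≤ |u x| ^ (p - 1) * |fderiv ℝ u x v| := by
    rw [← hux, mul_assoc, mul_assoc, ← abs_mul]
    exact mul_le_mul_of_nonneg_left (le_abs_self _) (Real.rpow_nonneg (abs_nonneg _) _)
  have hgrad_d : |u x| ^ p / d x ^ p ≤ |u x| ^ p / d x ^ p * fderiv ℝ d x v :=
    le_mul_of_one_le_right (by positivity) hdv
  have hd1 : d x ^ (1 - p) = (d x ^ (p - 1))⁻¹ := by rw [← Real.rpow_neg hd0.le, neg_sub]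
  have hd2 : d x ^ (1 - p - 1) = (d x ^ p)⁻¹ := by rw [← Real.rpow_neg hd0.le]; ring_nf
  rw [(hasFDerivAt_hardyTestFun hp hu hd hd0.ne').fderiv, Real.div_rpow (abs_nonneg _) hd0.le,
    Real.div_rpow (abs_nonneg _) hd0.le]
  calc _ = p * ((d x ^ (p - 1))⁻¹ * (|u x| ^ (p - 2) * u x * fderiv ℝ u x v))
        - (p - 1) * (|u x| ^ p / d x ^ p * fderiv ℝ d x v) := by
        simp only [add_apply, smul_apply, smul_eq_mul, hd1, hd2]
        ring
    _ ≤ p * ((d x ^ (p - 1))⁻¹ * (|u x| ^ (p - 1) * |fderiv ℝ u x v|))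
        - (p - 1) * (|u x| ^ p / d x ^ p) := by gcongr
    _ = _ := by ring

lemma hardy_const_mul_fderiv_hardyTestFun_le (hp : 1 < p) {x v : E} {b : ℝ}
    (hu : DifferentiableAt ℝ u x) (hd0 : 0 < d x) (hdv : 1 ≤ fderiv ℝ d x v)
    (huv : |fderiv ℝ u x v| ≤ b) :
    ((p - 1) / p) ^ (p - 1) * fderiv ℝ (hardyTestFun p u d) x v
      ≤ b ^ p - ((p - 1) / p) ^ p * (|u x| ^ p / d x ^ p) := by
  have hp0 : 0 < p := one_pos.trans hp
  have hκ : 0 ≤ ((p - 1) / p) ^ (p - 1) :=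
    Real.rpow_nonneg (div_nonneg (sub_nonneg.2 hp.le) hp0.le) _
  have hd : DifferentiableAt ℝ d x := by
    by_contra hd
    rw [fderiv_zero_of_not_differentiableAt hd] at hdv
    exact hdv.not_gt one_pos
  have ht : 0 ≤ |u x| / d x := div_nonneg (abs_nonneg _) hd0.le
  rw [← Real.div_rpow (abs_nonneg _) hd0.le]
  calc ((p - 1) / p) ^ (p - 1) * fderiv ℝ (hardyTestFun p u d) x v
      ≤ ((p - 1) / p) ^ (p - 1) *
          (p * ((|u x| / d x) ^ (p - 1) * |fderiv ℝ u x v|) - (p - 1) * (|u x| / d x) ^ p) :=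
        mul_le_mul_of_nonneg_left (fderiv_hardyTestFun_apply_le hp hu hd hd0 hdv) hκ
    _ ≤ ((p - 1) / p) ^ (p - 1) *
          (p * ((|u x| / d x) ^ (p - 1) * b) - (p - 1) * (|u x| / d x) ^ p) := by gcongr
    _ ≤ b ^ p - ((p - 1) / p) ^ p * (|u x| / d x) ^ p :=
        hardy_const_rpow_mul_le hp ht ((abs_nonneg _).trans huv)

end HardyTestFunction

section Calibration

variable {E : Type*} [NormedAddCommGroup E] [NormedSpace ℝ E]

lemma abs_le_of_forall_apply_le {H : Seminorm ℝ (StrongDual ℝ E)} {v : E} (hv : ∀ ξ, ξ v ≤ H ξ)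
    (ξ : StrongDual ℝ E) : |ξ v| ≤ H ξ :=
  abs_le'.2 ⟨hv ξ, by simpa only [neg_apply, map_neg_eq_map] using hv (-ξ)⟩

variable [FiniteDimensional ℝ E]

lemma continuous_seminorm (H : Seminorm ℝ E) : Continuous H :=
  (ConvexOn.locallyLipschitz H.convexOn).continuous

variable [MeasurableSpace E] [BorelSpace E] {μ : Measure E}
  {H : Seminorm ℝ (StrongDual ℝ E)} {Ω : Set E} {A : E → E} {p : ℝ} {u d : E → ℝ}

lemma locallyIntegrableOn_of_forall_apply_le [IsLocallyFiniteMeasure μ]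
    (hA : AEStronglyMeasurable A (μ.restrict Ω))
    (hAH : ∀ᵐ x ∂μ.restrict Ω, ∀ ξ, ξ (A x) ≤ H ξ) : LocallyIntegrableOn A Ω μ := by
  obtain ⟨C, hC, hHC⟩ := H.bound_of_continuous_normedSpace (continuous_seminorm H)
  refine locallyIntegrableOn_of_locallyIntegrable_restrict
    ((locallyIntegrable_const C).mono hA ?_)
  filter_upwards [hAH] with x hx
  rw [Real.norm_of_nonneg hC.le]
  exact NormedSpace.norm_le_dual_bound ℝ _ hC.le fun ξ =>
    (abs_le_of_forall_apply_le hx ξ).trans (hHC ξ)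

lemma integrable_seminorm_fderiv_rpow [IsFiniteMeasureOnCompacts μ]
    (H : Seminorm ℝ (StrongDual ℝ E)) (hp : 0 < p) {C : ℝ≥0} (hu : LipschitzWith C u)
    (huc : HasCompactSupport u) : Integrable (fun x => H (fderiv ℝ u x) ^ p) μ := by
  obtain ⟨D, hD, hHD⟩ := H.bound_of_continuous_normedSpace (continuous_seminorm H)
  rw [← integrableOn_iff_integrable_of_support_subset (s := tsupport u)]
  · refine Measure.integrableOn_of_bounded (M := (D * C) ^ p) huc.isCompact.measure_lt_top.ne
      (((continuous_seminorm H).measurable.comp (measurable_fderiv ℝ u)).pow_const p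
        |>.aestronglyMeasurable) (.of_forall fun x => ?_)
    have hnonneg : 0 ≤ H (fderiv ℝ u x) := apply_nonneg H _
    rw [Real.norm_of_nonneg (Real.rpow_nonneg hnonneg p)]
    gcongr
    exact (hHD _).trans (by gcongr; exact norm_fderiv_le_of_lipschitz ℝ hu)
  · intro x hx
    by_contra hxu
    exact hx (by simp [fderiv_of_notMem_tsupport ℝ hxu, Real.zero_rpow hp.ne'])

theorem hardy_of_calibration [μ.IsAddHaarMeasure] (hp : 1 < p) (hΩ : IsOpen Ω)
    (hA : AEStronglyMeasurable A (μ.restrict Ω)) (hAH : ∀ᵐ x ∂μ.restrict Ω, ∀ ξ, ξ (A x) ≤ H ξ)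
    (hAd : ∀ᵐ x ∂μ.restrict Ω, 1 ≤ fderiv ℝ d x (A x)) (hdiv : HasNonposDivergenceOn A Ω μ)
    (hd : LocallyLipschitzOn Ω d) (hd0 : ∀ x ∈ Ω, 0 < d x)
    (hu : LocallyLipschitz u) (huc : HasCompactSupport u) (hus : tsupport u ⊆ Ω) :
    ((p - 1) / p) ^ p * ∫ x in Ω, |u x| ^ p / d x ^ p ∂μ
      ≤ ∫ x in Ω, H (fderiv ℝ u x) ^ p ∂μ := by
  have hp0 : 0 < p := one_pos.trans hp
  have hκ : 0 ≤ (p - 1) / p := (div_pos (sub_pos.2 hp) hp0).le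
  obtain ⟨Cu, hCu⟩ := exists_lipschitzWith_of_hasCompactSupport hu huc
  obtain ⟨C, hφ⟩ := exists_lipschitzWith_hardyTestFun hp hu huc hus hd hd0
  have hφu : tsupport (hardyTestFun p u d) ⊆ tsupport u := tsupport_hardyTestFun_subset hp0.ne'
  have hφc : HasCompactSupport (hardyTestFun p u d) :=
    huc.isCompact.of_isClosed_subset (isClosed_tsupport _) hφu
  have hAloc := locallyIntegrableOn_of_forall_apply_le hA hAH
  have hflux : 0 ≤ ∫ x in Ω, fderiv ℝ (hardyTestFun p u d) x (A x) ∂μ :=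
    hdiv.integral_nonneg_of_lipschitzWith hΩ hAloc hφ hφc (hφu.trans hus)
      (hardyTestFun_nonneg hus hd0 hp0.ne')
  have hpointwise : ∀ᵐ x ∂μ.restrict Ω,
      ((p - 1) / p) ^ (p - 1) * fderiv ℝ (hardyTestFun p u d) x (A x)
        ≤ H (fderiv ℝ u x) ^ p - ((p - 1) / p) ^ p * (|u x| ^ p / d x ^ p) := by
    filter_upwards [hAH, hAd, ae_restrict_of_ae hCu.ae_differentiableAt,
      ae_restrict_mem hΩ.measurableSet] with x hAHx hAdx hux hx
    exact hardy_const_mul_fderiv_hardyTestFun_le hp hux (hd0 x hx) hAdx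
      (abs_le_of_forall_apply_le hAHx _)
  have hI := (integrableOn_abs_rpow_div_rpow (μ := μ) hp0 hu.continuous huc hus hd.continuousOn
    hd0).const_mul (((p - 1) / p) ^ p)
  have hJ : IntegrableOn (fun x => H (fderiv ℝ u x) ^ p) Ω μ :=
    (integrable_seminorm_fderiv_rpow H hp0 hCu huc).integrableOn
  have hmono := integral_mono_ae ((integrableOn_fderiv_apply hAloc hφ hφc (hφu.trans hus)).const_mul
    (((p - 1) / p) ^ (p - 1))) (hJ.sub hI) hpointwise
  simp only [Pi.sub_apply] at hmono
  rw [integral_const_mul, integral_sub hJ hI, integral_const_mul] at hmono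
  linarith [mul_nonneg (Real.rpow_nonneg hκ (p - 1)) hflux]

end Calibration

section SeminormDerivative

variable {E : Type*} [NormedAddCommGroup E] [NormedSpace ℝ E] (H : Seminorm ℝ E)

lemma fderiv_seminorm_apply_le (x v : E) : fderiv ℝ H x v ≤ H v := by
  by_cases hd : DifferentiableAt ℝ H x
  · refine le_of_tendsto (hd.hasFDerivAt.hasLineDerivAt v).tendsto_slope_zero_right ?_
    filter_upwards [self_mem_nhdsWithin] with t (ht : 0 < t)
    have hadd := map_add_le_add H x (t • v)
    rw [map_smul_eq_mul, Real.norm_of_nonneg ht.le] at hadd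
    rw [smul_eq_mul, inv_mul_le_iff₀ ht]
    simpa only [zero_smul, add_zero, sub_le_iff_le_add'] using hadd
  · simp [fderiv_zero_of_not_differentiableAt hd]

variable {H}

lemma fderiv_seminorm_apply_self {x : E} (hd : DifferentiableAt ℝ H x) :
    fderiv ℝ H x x = H x := by
  have hray : HasDerivAt (fun t : ℝ => (1 + t) * H x) (H x) 0 := by
    simpa using ((hasDerivAt_id (0 : ℝ)).const_add 1).mul_const (H x)
  refine (hd.hasFDerivAt.hasLineDerivAt x).unique (hray.congr_of_eventuallyEq ?_)
  filter_upwards [Ioi_mem_nhds neg_one_lt_zero] with t (ht : -1 < t)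
  rw [show x + t • x = (1 + t) • x by rw [add_smul, one_smul], map_smul_eq_mul,
    Real.norm_of_nonneg (by linarith)]

end SeminormDerivative

section Gradient

open InnerProductSpace

variable {E : Type*} [NormedAddCommGroup E] [InnerProductSpace ℝ E] [FiniteDimensional ℝ E]
  [MeasurableSpace E] [BorelSpace E]

lemma measurable_gradient (f : E → ℝ) : Measurable (gradient f) :=
  (toDual ℝ E).symm.continuous.measurable.comp (measurable_fderiv ℝ f)

theorem finsler_hardy_distance_to_boundary_general {μ : Measure E} [μ.IsAddHaarMeasure]
    {H : Seminorm ℝ E} (hH : ∀ ξ, H ξ ≠ 0 → DifferentiableAt ℝ H ξ) {p : ℝ} (hp : 1 < p)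
    {Ω : Set E} (hΩ : IsOpen Ω) {d : E → ℝ} (hd : LocallyLipschitzOn Ω d)
    (hd0 : ∀ x ∈ Ω, 0 < d x) (heik : ∀ᵐ x ∂μ.restrict Ω, 1 ≤ H (gradient d x))
    (hdiv : HasNonposDivergenceOn (fun x => gradient H (gradient d x)) Ω μ)
    {u : E → ℝ} (hu : LocallyLipschitz u) (huc : HasCompactSupport u) (hus : tsupport u ⊆ Ω) :
    ((p - 1) / p) ^ p * ∫ x in Ω, |u x| ^ p / d x ^ p ∂μ
      ≤ ∫ x in Ω, H (gradient u x) ^ p ∂μ := by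
  refine hardy_of_calibration
    (H := H.comp (toDual ℝ E).symm.toLinearEquiv.toLinearMap) hp hΩ
    ((measurable_gradient H).comp (measurable_gradient d)).aestronglyMeasurable
    (.of_forall fun x ξ => ?_) ?_ hdiv hd hd0 hu huc hus
  · calc ξ (gradient H (gradient d x)) = fderiv ℝ H (gradient d x) ((toDual ℝ E).symm ξ) := by
          rw [← inner_gradient_left, real_inner_comm, toDual_symm_apply]
      _ ≤ H ((toDual ℝ E).symm ξ) := fderiv_seminorm_apply_le H _ _
  · filter_upwards [heik] with x hx
    calc 1 ≤ H (gradient d x) := hx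
      _ = fderiv ℝ H (gradient d x) (gradient d x) :=
        (fderiv_seminorm_apply_self (hH _ (one_pos.trans_le hx).ne')).symm
      _ = fderiv ℝ d x (gradient H (gradient d x)) := by
        rw [← inner_gradient_left, ← inner_gradient_left, real_inner_comm]

end Gradient

section FinslerDistance

variable {N : ℕ} {H : Euc N → ℝ} {Ω : Set (Euc N)}

/-- The anisotropic distance `inf_{y ∈ ∂Ω} H⁰(x - y)` to the boundary of `Ω`; it has the junk value
`0` if `∂Ω` is empty. -/
def finslerDist (H : Euc N → ℝ) (Ω : Set (Euc N)) (x : Euc N) : ℝ :=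
  sInf {r : ℝ | ∃ y ∈ frontier Ω, r = polarNorm H (x - y)}

lemma finslerDist_eq_zero_of_frontier_eq_empty (h : frontier Ω = ∅) : finslerDist H Ω = 0 := by
  ext x
  simp [finslerDist, h]

namespace IsFinslerNorm

lemma add_le (hH : IsFinslerNorm H) (x y : Euc N) : H (x + y) ≤ H x + H y := by
  have hmid := hH.convexOn.2 (mem_univ x) (mem_univ y) one_half_pos.le one_half_pos.le
    (add_halves 1)
  rw [← smul_add, hH.homog, abs_of_pos one_half_pos, smul_eq_mul, smul_eq_mul] at hmid
  linarith

/-- A Finsler norm, bundled as a seminorm. -/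
def toSeminorm (hH : IsFinslerNorm H) : Seminorm ℝ (Euc N) :=
  Seminorm.of H hH.add_le hH.homog

lemma differentiableAt (hH : IsFinslerNorm H) {ξ : Euc N} (hξ : H ξ ≠ 0) :
    DifferentiableAt ℝ H ξ := by
  have hξ0 : ξ ≠ 0 := by
    rintro rfl
    exact hξ (map_zero hH.toSeminorm)
  exact (hH.smooth.contDiffAt (isOpen_compl_singleton.mem_nhds hξ0)).differentiableAt two_ne_zero

lemma pos (hH : IsFinslerNorm H) {ξ : Euc N} (hξ : ξ ≠ 0) : 0 < H ξ := by
  obtain ⟨a, _, ha, -, hbound⟩ := hH.bounds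
  exact (mul_pos ha (norm_pos_iff.2 hξ)).trans_le (hbound ξ).1

lemma bddAbove_inner_div (hH : IsFinslerNorm H) (x : Euc N) :
    BddAbove {r : ℝ | ∃ ξ : Euc N, ξ ≠ 0 ∧ r = ⟪ξ, x⟫ / H ξ} := by
  obtain ⟨a, _, ha, -, hbound⟩ := hH.bounds
  refine ⟨a⁻¹ * ‖x‖, ?_⟩
  rintro _ ⟨ξ, hξ, rfl⟩
  rw [div_le_iff₀ (hH.pos hξ)]
  calc ⟪ξ, x⟫ ≤ ‖ξ‖ * ‖x‖ := real_inner_le_norm ξ x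
    _ = a⁻¹ * ‖x‖ * (a * ‖ξ‖) := by field_simp
    _ ≤ a⁻¹ * ‖x‖ * H ξ := by gcongr; exact (hbound ξ).1

lemma inner_le_mul_polarNorm (hH : IsFinslerNorm H) (ξ x : Euc N) :
    ⟪ξ, x⟫ ≤ H ξ * polarNorm H x := by
  rcases eq_or_ne ξ 0 with rfl | hξ
  · simp [show H 0 = 0 from map_zero hH.toSeminorm]
  · rw [← div_le_iff₀' (hH.pos hξ)]
    exact le_csSup (hH.bddAbove_inner_div x) ⟨ξ, hξ, rfl⟩

lemma exists_mul_norm_le_polarNorm (hH : IsFinslerNorm H) :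
    ∃ c > 0, ∀ x, c * ‖x‖ ≤ polarNorm H x := by
  obtain ⟨a, b, ha, hab, hbound⟩ := hH.bounds
  have hb : 0 < b := ha.trans_le hab
  refine ⟨b⁻¹, inv_pos.2 hb, fun x => (inv_mul_le_iff₀ hb).2 ?_⟩
  rcases eq_or_ne x 0 with rfl | hx
  · rw [norm_zero]
    refine mul_nonneg hb.le (Real.sSup_nonneg ?_)
    rintro _ ⟨ξ, -, rfl⟩
    simp
  · have hx' : 0 < ‖x‖ := norm_pos_iff.2 hx
    have hself : ‖x‖ * ‖x‖ ≤ H x * polarNorm H x := by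
      rw [← real_inner_self_eq_norm_mul_norm]
      exact hH.inner_le_mul_polarNorm x x
    have hpolar : 0 ≤ polarNorm H x :=
      (pos_of_mul_pos_right ((mul_pos hx' hx').trans_le hself) (hH.nonneg x)).le
    refine le_of_mul_le_mul_left ?_ hx'
    calc ‖x‖ * ‖x‖ ≤ H x * polarNorm H x := hself
      _ ≤ b * ‖x‖ * polarNorm H x := by gcongr; exact (hbound x).2
      _ = ‖x‖ * (b * polarNorm H x) := by ring

lemma finslerDist_pos (hH : IsFinslerNorm H) (hΩ : IsOpen Ω) (hΩ' : (frontier Ω).Nonempty)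
    {x : Euc N} (hx : x ∈ Ω) : 0 < finslerDist H Ω x := by
  obtain ⟨c, hc, hpolar⟩ := hH.exists_mul_norm_le_polarNorm
  have hxΩ : x ∉ frontier Ω := fun h => (hΩ.frontier_eq ▸ h).2 hx
  have hdist : 0 < Metric.infDist x (frontier Ω) :=
    (isClosed_frontier.notMem_iff_infDist_pos hΩ').1 hxΩ
  obtain ⟨y₀, hy₀⟩ := hΩ'
  refine (mul_pos hc hdist).trans_le (le_csInf ⟨_, y₀, hy₀, rfl⟩ ?_)
  rintro _ ⟨y, hy, rfl⟩
  calc c * Metric.infDist x (frontier Ω) ≤ c * dist x y := by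
        gcongr
        exact Metric.infDist_le_dist_of_mem hy
    _ = c * ‖x - y‖ := by rw [dist_eq_norm]
    _ ≤ polarNorm H (x - y) := hpolar (x - y)

lemma frontier_nonempty_of_eikonal (hH : IsFinslerNorm H) (hΩ : IsOpen Ω) (hΩ' : Ω.Nonempty)
    (heik : ∀ᵐ x ∂volume.restrict Ω, H (gradient (finslerDist H Ω) x) = 1) :
    (frontier Ω).Nonempty := by
  by_contra! h
  have hgrad : ∀ x, H (gradient (finslerDist H Ω) x) = 0 := fun x => by
    rw [finslerDist_eq_zero_of_frontier_eq_empty h]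
    simp [gradient, show H 0 = 0 from map_zero hH.toSeminorm]
  simp only [hgrad, zero_ne_one, ae_iff, not_false_eq_true, ofPred_true,
    Measure.restrict_apply_univ] at heik
  exact (hΩ.measure_pos volume hΩ').ne' heik

end IsFinslerNorm

end FinslerDistance

/-- Anisotropic Hardy inequality with the anisotropic distance to the boundary,
on a domain where d_H is Lipschitz, satisfies the eikonal equation H(∇d_H) = 1
a.e., and is distributionally Δ_{H,p}-superharmonic. -/
theorem finsler_hardy_distance_to_boundary
    (N : ℕ) (hN : 2 ≤ N) (H : Euc N → ℝ) (hH : IsFinslerNorm H)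
    (p : ℝ) (hp : 1 < p)
    (Ω : Set (Euc N)) (hΩopen : IsOpen Ω) (hΩconn : IsConnected Ω)
    (dH : Euc N → ℝ)
    (hdH : ∀ x, dH x = sInf {r : ℝ | ∃ y ∈ frontier Ω, r = polarNorm H (x - y)})
    (hLip : ∃ K : ℝ≥0, LipschitzOnWith K dH Ω)
    (heik : ∀ᵐ x ∂(volume.restrict Ω), H (gradient dH x) = 1)
    (hsuper : ∀ φ : Euc N → ℝ, IsTestFun Ω φ → (∀ x, 0 ≤ φ x) →
      0 ≤ ∫ x in Ω, ⟪gradient H (gradient dH x), gradient φ x⟫)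
    (u : Euc N → ℝ) (hu : IsTestFun Ω u) :
    ((p - 1) / p) ^ p * ∫ x in Ω, |u x| ^ p / dH x ^ p
      ≤ ∫ x in Ω, H (gradient u x) ^ p := by
  obtain rfl : dH = finslerDist H Ω := funext hdH
  obtain ⟨K, hK⟩ := hLip
  have hfrontier := hH.frontier_nonempty_of_eikonal hΩopen hΩconn.nonempty heik
  have hdiv : HasNonposDivergenceOn (fun x => gradient H (gradient (finslerDist H Ω) x)) Ω volume :=
    fun φ hφ hφc hφs hφ0 => by
      simpa only [inner_gradient_right, conj_trivial] using hsuper φ ⟨hφ, hφc, hφs⟩ hφ0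
  exact finsler_hardy_distance_to_boundary_general (H := hH.toSeminorm)
    (fun _ => hH.differentiableAt) hp hΩopen (fun _ _ => ⟨K, Ω, self_mem_nhdsWithin, hK⟩)
    (fun _ => hH.finslerDist_pos hΩopen hfrontier) (heik.mono fun _ hx => hx.ge) hdiv
    (hu.1.of_le (by norm_num)).locallyLipschitz hu.2.1 hu.2.2
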